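/- arXiv:2602.20625 — 2 statements merged into one kernel-verified Lean document; each statement's English description precedes it below -/
import Mathlib

section
/- Let k ≥ 1 be a fixed integer. In the ring of formal power series in x over the polynomial ring ℤ[y], let F = Σ_{n≥0} (Σ_{m∈P(n)} y^{B(m)}) x^n. Then F · (1 − Σ_{j≥1} w_j x^j) = 1, where w_j = y if j ∈ Ev_{>k} and w_j = 1 otherwise; equivalently, F · (1 − Σ_{j≥1} x^j − (y−1)·Σ_{j∈Ev_{>k}} x^j) = 1. -/
open PowerSeries

/-- The number of parts of a composition that are even and strictly greater than `k`. -/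
def Bstat (k : ℕ) {n : ℕ} (m : Composition n) : ℕ :=
  m.blocks.countP fun j => decide (Even j ∧ k < j)

/-- The bivariate generating function `F(x,y) = Σ_n (Σ_{m ∈ P(n)} y^{B(m)}) x^n`,
viewed as a power series in `x` over `ℤ[y]`. -/
noncomputable def Fgen (k : ℕ) : PowerSeries (Polynomial ℤ) :=
  PowerSeries.mk fun n => ∑ m : Composition n, (Polynomial.X : Polynomial ℤ) ^ Bstat k m

/-- `Σ_{j ≥ 1} w_j x^j` where `w_j = y` if `j` is even and `> k`, and `w_j = 1` otherwise. -/
noncomputable def Wgen (k : ℕ) : PowerSeries (Polynomial ℤ) :=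
  PowerSeries.mk fun j =>
    if j = 0 then 0 else if Even j ∧ k < j then Polynomial.X else 1

/-- `Σ_{j ≥ 1} x^j`. -/
noncomputable def Ugen : PowerSeries (Polynomial ℤ) :=
  PowerSeries.mk fun j => if j = 0 then 0 else 1

/-- `Σ_{j ∈ Ev_{>k}} x^j`. -/
noncomputable def Egen (k : ℕ) : PowerSeries (Polynomial ℤ) :=
  PowerSeries.mk fun j => if Even j ∧ k < j then 1 else 0

/-!
A nonempty composition is its first part followed by a composition of the remainder. Hence, for any
weight `w` on parts, the generating function `F` of compositions weighted by the product of the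
weights of their parts satisfies `F = 1 + W * F`, where `W = ∑_{j ≥ 1} w_j x^j`. The theorem is the
case where even parts greater than `k` have weight `y` and all others weight `1`.
-/

section WeightedCompositions

open Finset

variable {R : Type*}

/-- The composition of `n + 1` with first part `i + 1`, followed by the parts of a composition
of `j`, where `(i, j)` ranges over the pairs with `i + j = n`. -/
def compositionCons {n : ℕ} (p : Σ ij : antidiagonal n, Composition ij.1.2) :
    Composition (n + 1) :=
  ((Composition.single (p.1.1.1 + 1) p.1.1.1.succ_pos).append p.2).cast <| by
    rw [add_right_comm, mem_antidiagonal.1 p.1.2]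

theorem blocks_compositionCons {n : ℕ} (p : Σ ij : antidiagonal n, Composition ij.1.2) :
    (compositionCons p).blocks = (p.1.1.1 + 1) :: p.2.blocks :=
  rfl

theorem compositionCons_injective (n : ℕ) : Function.Injective (compositionCons (n := n)) := by
  rintro ⟨⟨⟨i, j⟩, hij⟩, c⟩ ⟨⟨⟨i', j'⟩, hij'⟩, c'⟩ h
  obtain ⟨first_eq, rest_eq⟩ : i + 1 = i' + 1 ∧ c.blocks = c'.blocks := by
    simpa only [blocks_compositionCons, List.cons.injEq] using congrArg Composition.blocks h
  obtain rfl : i = i' := Nat.succ_injective first_eq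
  obtain rfl : j = j' := c.blocks_sum.symm.trans (rest_eq ▸ c'.blocks_sum)
  obtain rfl : c = c' := Composition.ext rest_eq
  rfl

theorem compositionCons_surjective (n : ℕ) : Function.Surjective (compositionCons (n := n)) := by
  rintro ⟨_ | ⟨_ | i, rest⟩, pos, sum_eq⟩
  · simp at sum_eq
  · simpa using pos List.mem_cons_self
  · have sum_rest : i + rest.sum = n := by
      rw [List.sum_cons] at sum_eq
      lia
    exact ⟨⟨⟨(i, rest.sum), mem_antidiagonal.2 sum_rest⟩,
      ⟨rest, fun hj ↦ pos (List.mem_cons_of_mem _ hj), rfl⟩⟩, rfl⟩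

theorem sum_composition_succ {M : Type*} [AddCommMonoid M] (f : List ℕ → M) (n : ℕ) :
    ∑ c : Composition (n + 1), f c.blocks =
      ∑ ij ∈ antidiagonal n, ∑ c : Composition ij.2, f ((ij.1 + 1) :: c.blocks) := by
  have bijective : Function.Bijective (compositionCons (n := n)) :=
    ⟨compositionCons_injective n, compositionCons_surjective n⟩
  rw [← bijective.sum_comp, Fintype.sum_sigma, ← sum_coe_sort (antidiagonal n)]
  simp only [blocks_compositionCons]

/-- The power series `∑_{j ≥ 1} w_j x^j`; the value `w 0` is ignored. -/
noncomputable def partSeries [Semiring R] (w : ℕ → R) : R⟦X⟧ :=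
  PowerSeries.mk fun j ↦ if j = 0 then 0 else w j

/-- The generating function of compositions by size, each composition being weighted by the product
of the weights `w` of its parts, in order. -/
noncomputable def compositionSeries [Semiring R] (w : ℕ → R) : R⟦X⟧ :=
  PowerSeries.mk fun n ↦ ∑ c : Composition n, (c.blocks.map w).prod

theorem compositionSeries_eq_one_add [Semiring R] (w : ℕ → R) :
    compositionSeries w = 1 + partSeries w * compositionSeries w := by
  ext n
  rw [map_add, coeff_mul, coeff_one]
  cases n with
  | zero =>
    have blocks_eq_nil (c : Composition 0) : c.blocks = [] := c.blocks_eq_nil.2 rfl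
    simp [compositionSeries, partSeries, blocks_eq_nil, composition_card]
  | succ n =>
    rw [Nat.sum_antidiagonal_succ]
    simp [compositionSeries, partSeries, mul_sum,
      sum_composition_succ (fun l ↦ (l.map w).prod)]

theorem one_sub_partSeries_mul_compositionSeries [Ring R] (w : ℕ → R) :
    (1 - partSeries w) * compositionSeries w = 1 := by
  rw [sub_mul, one_mul, sub_eq_iff_eq_add]
  exact compositionSeries_eq_one_add w

end WeightedCompositions

theorem prod_map_ite_one_eq_pow_countP {M α : Type*} [Monoid M] (p : α → Prop)
    [DecidablePred p] (a : M) (l : List α) :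
    (l.map fun j ↦ if p j then a else 1).prod = a ^ l.countP p := by
  induction l with
  | nil => simp
  | cons j l ih => by_cases hj : p j <;> simp [hj, ih, pow_succ']

theorem Fgen_eq_compositionSeries (k : ℕ) :
    Fgen k = compositionSeries fun j ↦ if Even j ∧ k < j then Polynomial.X else 1 := by
  simp only [Fgen, Bstat, compositionSeries, prod_map_ite_one_eq_pow_countP]

theorem Wgen_eq_partSeries (k : ℕ) :
    Wgen k = partSeries fun j ↦ if Even j ∧ k < j then Polynomial.X else 1 :=
  rfl

theorem Wgen_eq_Ugen_add (k : ℕ) :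
    Wgen k = Ugen + PowerSeries.C (Polynomial.X - 1) * Egen k := by
  ext1 j
  rw [map_add, coeff_C_mul]
  simp only [Wgen, Ugen, Egen, coeff_mk]
  rcases eq_or_ne j 0 with rfl | hj
  · simp
  · simp only [hj, if_false]
    split_ifs <;> ring

theorem stmt0 (k : ℕ) (hk : 1 ≤ k) :
    Fgen k * (1 - Wgen k) = 1 ∧
    Fgen k * (1 - Ugen - PowerSeries.C (R := Polynomial ℤ) (Polynomial.X - 1) * Egen k) = 1 := by
  have Fgen_mul : Fgen k * (1 - Wgen k) = 1 := by
    rw [mul_comm, Fgen_eq_compositionSeries, Wgen_eq_partSeries]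
    exact one_sub_partSeries_mul_compositionSeries _
  refine ⟨Fgen_mul, ?_⟩
  rwa [sub_sub, ← Wgen_eq_Ugen_add]
end

section
/- Let k ≥ 1 be a fixed integer and set δ = 1 if k is odd and δ = 2 if k is even. For n ≥ 0 let c_k(n) denote the number of compositions m of n with B(m) = 0, i.e. compositions of n having no even part strictly greater than k. Then in ℤ[[x]]: ((1 − 2x)(1 − x²) + (1 − x)·x^{k+δ}) · Σ_{n≥0} c_k(n)·x^n = (1 − x)(1 − x²). -/
open PowerSeries

/-- `c k n` is the number of compositions of `n` having no even part strictly
greater than `k`. -/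
def cComp (k n : ℕ) : ℕ :=
  (Finset.univ.filter fun m : Composition n => Bstat k m = 0).card

/-!
Weight a composition by the product `f m₁ ⋯ f m_r` over its parts. Splitting off the first part
shows that the total weights have a generating series `G` satisfying `G = 1 + F * G`, where
`F = ∑_{j ≥ 1} f j * X ^ j`. When `f` is the indicator of the parts other than the even ones
above `k`, `F = X / (1 - X) - X ^ (k + δ) / (1 - X ^ 2)`, because `k + δ` is the least even integer
above `k`.
-/

open Finset

section FirstPart

/-- The composition of `n + 1` obtained by putting a part `i + 1` in front of a composition of `j`,
where `i + j = n`. Taking the equation as an argument avoids casts between compositions of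
propositionally equal integers. -/
def consComposition {i j n : ℕ} (h : i + j = n) (m : Composition j) : Composition (n + 1) where
  blocks := (i + 1) :: m.blocks
  blocks_pos := by
    rintro a (_ | ⟨_, ha⟩)
    exacts [i.succ_pos, m.blocks_pos ha]
  blocks_sum := by rw [List.sum_cons, m.blocks_sum]; omega

theorem consComposition_bijective (n : ℕ) :
    Function.Bijective fun x : Σ p : antidiagonal n, Composition p.1.2 =>
      consComposition (mem_antidiagonal.1 x.1.2) x.2 := by
  constructor
  · rintro ⟨⟨⟨i, j⟩, hij⟩, m⟩ ⟨⟨⟨i', j'⟩, hij'⟩, m'⟩ heq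
    obtain ⟨hi, hblocks⟩ := List.cons.inj (congrArg Composition.blocks heq)
    obtain rfl : i = i' := Nat.succ_injective hi
    cases Composition.sigma_eq_iff_blocks_eq (c := ⟨j, m⟩) (c' := ⟨j', m'⟩) |>.2 hblocks
    rfl
  · rintro ⟨_ | ⟨a, l⟩, hpos, hsum⟩
    · simp at hsum
    · obtain ⟨i, rfl⟩ := Nat.exists_eq_add_one.2 (hpos List.mem_cons_self)
      have hil : i + l.sum = n := by rw [List.sum_cons] at hsum; omega
      exact ⟨⟨⟨(i, l.sum), mem_antidiagonal.2 hil⟩,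
        ⟨l, fun hj => hpos (List.mem_cons_of_mem _ hj), rfl⟩⟩, rfl⟩

end FirstPart

section GenFun

variable {R : Type*} [Semiring R]

/-- The generating series whose `n`-th coefficient is the sum, over the compositions
`(m₁, …, m_r)` of `n`, of the weights `f m₁ ⋯ f m_r`. The value `f 0` is irrelevant. -/
noncomputable def compositionGenFun (f : ℕ → R) : R⟦X⟧ :=
  PowerSeries.mk fun n => ∑ m : Composition n, (m.blocks.map f).prod

theorem sum_composition_zero_prod_map (f : ℕ → R) :
    ∑ m : Composition 0, (m.blocks.map f).prod = 1 := by
  have hnil (m : Composition 0) : m.blocks = [] := m.blocks_eq_nil.2 rfl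
  simp [hnil, composition_card]

theorem sum_composition_succ_prod_map (f : ℕ → R) (n : ℕ) :
    ∑ m : Composition (n + 1), (m.blocks.map f).prod =
      ∑ p ∈ antidiagonal n, f (p.1 + 1) * ∑ m : Composition p.2, (m.blocks.map f).prod := by
  rw [← (consComposition_bijective n).sum_comp, Fintype.sum_sigma]
  simp only [consComposition, List.map_cons, List.prod_cons, ← mul_sum]
  exact sum_coe_sort (antidiagonal n) fun p =>
    f (p.1 + 1) * ∑ m : Composition p.2, (m.blocks.map f).prod

theorem compositionGenFun_eq_one_add (f : ℕ → R) :
    compositionGenFun f =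
      1 + X * PowerSeries.mk (fun j => f (j + 1)) * compositionGenFun f := by
  ext (_ | n)
  · simp [compositionGenFun, sum_composition_zero_prod_map]
  · rw [mul_assoc, map_add, coeff_succ_X_mul, PowerSeries.coeff_mul]
    simp [compositionGenFun, sum_composition_succ_prod_map, coeff_one]

theorem list_prod_map_boole {ι : Type*} (p : ι → Prop) [DecidablePred p] (l : List ι) :
    (l.map fun j => if p j then (1 : R) else 0).prod = if ∀ j ∈ l, p j then 1 else 0 := by
  induction l with
  | nil => simp
  | cons a l ih => simp [ih, ← ite_and, and_comm]

theorem compositionGenFun_boole (p : ℕ → Prop) [DecidablePred p] :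
    compositionGenFun (fun j => if p j then (1 : R) else 0) =
      PowerSeries.mk fun n => (#{m : Composition n | ∀ j ∈ m.blocks, p j} : R) := by
  simp only [compositionGenFun, list_prod_map_boole, sum_boole]

end GenFun

theorem mk_cComp_eq_compositionGenFun {R : Type*} [Semiring R] (k : ℕ) :
    PowerSeries.mk (fun n => (cComp k n : R)) =
      compositionGenFun fun j => if ¬(Even j ∧ k < j) then 1 else 0 := by
  rw [compositionGenFun_boole]
  simp only [cComp, Bstat, List.countP_eq_zero, decide_eq_true_eq]

section PartSeries

variable {R : Type*} [CommRing R]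

theorem one_sub_X_pow_mul_expand_mk_one {d : ℕ} (hd : d ≠ 0) :
    (1 - X ^ d) * expand d hd (PowerSeries.mk 1 : R⟦X⟧) = 1 := by
  simpa [mul_comm] using congrArg (expand d hd) (mk_one_mul_one_sub_eq_one R)

theorem mk_boole_even_and_lt {k δ : ℕ} (hδ : δ = if Odd k then 1 else 2) :
    PowerSeries.mk (fun j => if Even j ∧ k < j then (1 : R) else 0) =
      X ^ (k + δ) * expand 2 two_ne_zero (PowerSeries.mk 1) := by
  ext n
  have heven_lt : Even n ∧ k < n ↔ k + δ ≤ n ∧ 2 ∣ n - (k + δ) := by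
    simp only [Nat.even_iff, Nat.odd_iff] at hδ ⊢
    split_ifs at hδ <;> omega
  simp only [coeff_X_pow_mul', coeff_expand, coeff_mk, Pi.one_apply, ← ite_and, heven_lt]

theorem X_mul_mk_boole_not (p : ℕ → Prop) [DecidablePred p] (hp : ¬p 0) :
    X * PowerSeries.mk (fun j => if ¬p (j + 1) then (1 : R) else 0) =
      X * PowerSeries.mk 1 - PowerSeries.mk fun j => if p j then 1 else 0 := by
  ext (_ | n)
  · simp [hp]
  · simp only [coeff_succ_X_mul, map_sub, coeff_mk, Pi.one_apply, ite_not]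
    split_ifs <;> simp

end PartSeries

theorem stmt4 (k : ℕ) (hk : 1 ≤ k) (δ : ℕ) (hδ : δ = if Odd k then 1 else 2) :
    ((1 - 2 * PowerSeries.X) * (1 - PowerSeries.X ^ 2)
        + (1 - PowerSeries.X) * PowerSeries.X ^ (k + δ))
      * PowerSeries.mk (fun n => (cComp k n : ℤ))
      = (1 - PowerSeries.X) * (1 - PowerSeries.X ^ 2) := by
  have hG := compositionGenFun_eq_one_add fun j => if ¬(Even j ∧ k < j) then (1 : ℤ) else 0
  rw [X_mul_mk_boole_not (fun j => Even j ∧ k < j) (by simp), mk_boole_even_and_lt hδ,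
    ← mk_cComp_eq_compositionGenFun] at hG
  have hgeom := mk_one_mul_one_sub_eq_one ℤ
  have hgeom_two := one_sub_X_pow_mul_expand_mk_one (R := ℤ) two_ne_zero
  set G : ℤ⟦X⟧ := PowerSeries.mk fun n => (cComp k n : ℤ)
  linear_combination (1 - X) * (1 - X ^ 2) * hG + X * (1 - X ^ 2) * G * hgeom
    - (1 - X) * X ^ (k + δ) * G * hgeom_two
end
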